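/- Let (κ, k) be a pair of Sonine kernels from S_{−1} and let n ∈ ℕ, n ≥ 1. Define κ_n(t) = ({1}^{n−1} * κ)(t), the convolution of κ with the (n−1)-fold convolution power of the constant function 1, and k_n = k. Then κ_n ∈ C_{−1}(0,∞), k_n ∈ C_{−1,0}(0,∞), and (κ_n * k_n)(t) = t^{n−1}/(n−1)! for all t > 0; that is, the pair (κ_n, k_n) belongs to the set L_n. -/

import Mathlib

open Real MeasureTheory Set Filter Topology

/-- The Laplace convolution `(f * g)(t) = ∫₀ᵗ f(t-τ) g(τ) dτ`. -/
noncomputable def lconv (f g : ℝ → ℝ) : ℝ → ℝ :=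
  fun t => ∫ τ in (0:ℝ)..t, f (t - τ) * g τ

/-- The space `C_{-1}(0,∞)`: functions of the form `t^p f₁(t)` with `p > -1`
and `f₁` continuous on `[0,∞)`. -/
def Cm1 (f : ℝ → ℝ) : Prop :=
  ∃ p : ℝ, -1 < p ∧ ∃ f₁ : ℝ → ℝ, ContinuousOn f₁ (Set.Ici 0) ∧
    ∀ t : ℝ, 0 < t → f t = t ^ p * f₁ t

/-- The subspace `C_{-1,0}(0,∞)`: functions of the form `t^p f₁(t)` with `-1 < p < 0`
and `f₁` continuous on `[0,∞)`. -/
def Cm10 (f : ℝ → ℝ) : Prop :=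
  ∃ p : ℝ, -1 < p ∧ p < 0 ∧ ∃ f₁ : ℝ → ℝ, ContinuousOn f₁ (Set.Ici 0) ∧
    ∀ t : ℝ, 0 < t → f t = t ^ p * f₁ t

/-- Convolution with the `m`-fold convolution power of the constant function `{1}`:
`onesConv 0 κ = κ` (i.e. `{1}^0 * κ = κ`) and `onesConv (m+1) κ = {1} * (onesConv m κ)`. -/
noncomputable def onesConv : ℕ → (ℝ → ℝ) → ℝ → ℝ
  | 0, κ => κ
  | m + 1, κ => lconv (fun _ => 1) (onesConv m κ)

theorem Cm1.intervalIntegrable {f : ℝ → ℝ} (hf : Cm1 f) {t : ℝ} (ht : 0 ≤ t) :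
    IntervalIntegrable f volume 0 t := by
  obtain ⟨p, hp, f₁, hc, he⟩ := hf
  have h1 : IntervalIntegrable (fun x : ℝ => x ^ p) volume 0 t :=
    intervalIntegral.intervalIntegrable_rpow' hp
  have h2 : IntervalIntegrable (fun x : ℝ => x ^ p * f₁ x) volume 0 t := by
    apply h1.mul_continuousOn
    rw [uIcc_of_le ht]
    exact hc.mono Icc_subset_Ici_self
  apply h2.congr
  intro x hx
  rw [uIoc_of_le ht] at hx
  exact (he x hx.1).symm

theorem Cm1.lconv_one {f : ℝ → ℝ} (hf : Cm1 f) : Cm1 (lconv (fun _ => 1) f) := by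
  refine ⟨0, by norm_num, lconv (fun _ => 1) f, ?_, fun t _ => by simp⟩
  intro t ht
  have ht0 : (0:ℝ) ≤ t := ht
  have hi := hf.intervalIntegrable (t := t + 1) (by linarith)
  have hc : ContinuousOn (fun x => ∫ τ in (0:ℝ)..x, f τ) (Icc 0 (t + 1)) := by
    have := intervalIntegral.continuousOn_primitive_interval' hi left_mem_uIcc
    rwa [uIcc_of_le (by linarith)] at this
  have h2 : ContinuousWithinAt (fun x => ∫ τ in (0:ℝ)..x, f τ) (Ici 0) t := by
    apply (hc t ⟨ht0, by linarith⟩).mono_of_mem_nhdsWithin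
    rw [← Ici_inter_Iic]
    exact inter_mem self_mem_nhdsWithin (mem_nhdsWithin_of_mem_nhds (Iic_mem_nhds (by linarith)))
  have h3 : lconv (fun _ => 1) f = fun x => ∫ τ in (0:ℝ)..x, f τ := by
    funext x; simp [lconv]
  rw [h3]; exact h2

theorem lconv_lconv_one {f k : ℝ → ℝ} (hf : Cm1 f) (hk : Cm1 k) {t : ℝ} (ht : 0 < t) :
    lconv (lconv (fun _ => 1) f) k t = ∫ u in (0:ℝ)..t, lconv f k u := by
  set F : ℝ → ℝ := (Ioc 0 t).indicator f with hF
  set G : ℝ → ℝ := (Ioc 0 t).indicator k with hG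
  have iF : Integrable F volume := by
    rw [hF, integrable_indicator_iff measurableSet_Ioc]
    exact (intervalIntegrable_iff_integrableOn_Ioc_of_le ht.le).1 (hf.intervalIntegrable ht.le)
  have iG : Integrable G volume := by
    rw [hG, integrable_indicator_iff measurableSet_Ioc]
    exact (intervalIntegrable_iff_integrableOn_Ioc_of_le ht.le).1 (hk.intervalIntegrable ht.le)
  have iP : Integrable (fun p : ℝ × ℝ => G p.2 * F (p.1 - p.2)) (volume.prod volume) := by
    simpa using iG.convolution_integrand (ContinuousLinearMap.mul ℝ ℝ) iF
  have iP' : Integrable (fun p : ℝ × ℝ => G p.2 * F (p.1 - p.2))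
      ((volume.restrict (Ioc 0 t)).prod (volume.restrict (Ioc 0 t))) := by
    rw [Measure.prod_restrict]; exact iP.restrict
  have swap := integral_integral_swap (f := fun u τ => G τ * F (u - τ)) iP'
  have hR : (∫ u in (0:ℝ)..t, lconv f k u)
      = ∫ u in Ioc 0 t, ∫ τ in Ioc 0 t, G τ * F (u - τ) := by
    rw [intervalIntegral.integral_of_le ht.le]
    apply setIntegral_congr_fun measurableSet_Ioc
    intro u hu
    simp only [lconv]
    rw [intervalIntegral.integral_of_le hu.1.le, integral_Ioc_eq_integral_Ioo]
    have e1 : ∫ τ in Ioo 0 u, f (u - τ) * k τ = ∫ τ in Ioo 0 u, G τ * F (u - τ) := by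
      apply setIntegral_congr_fun measurableSet_Ioo
      intro τ hτ
      have a1 : τ ∈ Ioc 0 t := ⟨hτ.1, by linarith [hτ.2, hu.2]⟩
      have a2 : u - τ ∈ Ioc 0 t := ⟨by linarith [hτ.2], by linarith [hτ.1, hu.2]⟩
      simp only [hF, hG, indicator_of_mem a1, indicator_of_mem a2, mul_comm]
    rw [e1]
    symm
    apply setIntegral_eq_of_subset_of_forall_sdiff_eq_zero measurableSet_Ioc
    · intro τ hτ
      exact ⟨hτ.1, by linarith [hτ.2, hu.2]⟩
    · intro τ hτ
      have : u - τ ∉ Ioc 0 t := fun h => hτ.2 ⟨hτ.1.1, by linarith [h.1]⟩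
      simp [hF, indicator_of_notMem this]
  rw [hR, swap]
  simp only [lconv]
  rw [intervalIntegral.integral_of_le ht.le]
  apply setIntegral_congr_fun measurableSet_Ioc
  intro τ hτ
  simp only [one_mul]
  rw [integral_const_mul, ← intervalIntegral.integral_of_le ht.le,
    intervalIntegral.integral_comp_sub_right (fun x => F x) τ, mul_comm]
  have hG' : G τ = k τ := by simp only [hG, indicator_of_mem hτ]
  rw [hG']
  congr 1
  rw [intervalIntegral.integral_of_le (by linarith [hτ.2]),
    intervalIntegral.integral_of_le (by linarith [hτ.1, hτ.2])]
  have e2 : ∫ x in Ioc 0 (t - τ), f x = ∫ x in Ioc 0 (t - τ), F x := by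
    apply setIntegral_congr_fun measurableSet_Ioc
    intro x hx
    have a1 : x ∈ Ioc 0 t := ⟨hx.1, by linarith [hx.2, hτ.1]⟩
    simp only [hF, indicator_of_mem a1]
  rw [e2]
  symm
  apply setIntegral_eq_of_subset_of_forall_sdiff_eq_zero measurableSet_Ioc
  · intro x hx
    exact ⟨by linarith [hx.1, hτ.1], hx.2⟩
  · intro x hx
    have : x ∉ Ioc 0 t := fun h => hx.2 ⟨h.1, hx.1.2⟩
    simp only [hF, indicator_of_notMem this]

theorem Cm10.cm1 {f : ℝ → ℝ} (h : Cm10 f) : Cm1 f := by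
  obtain ⟨p, hp, _, h⟩ := h
  exact ⟨p, hp, h⟩

theorem onesConv_aux (κ k : ℝ → ℝ) (hκ : Cm1 κ) (hk : Cm1 k)
    (hSonine : ∀ t : ℝ, 0 < t → lconv κ k t = 1) (m : ℕ) :
    Cm1 (onesConv m κ) ∧
      ∀ t : ℝ, 0 < t → lconv (onesConv m κ) k t = t ^ m / m.factorial := by
  induction m with
  | zero => exact ⟨hκ, fun t ht => by simpa [onesConv] using hSonine t ht⟩
  | succ m ih =>
    refine ⟨ih.1.lconv_one, fun t ht => ?_⟩
    show lconv (lconv (fun _ => 1) (onesConv m κ)) k t = _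
    rw [lconv_lconv_one ih.1 hk ht]
    have : (∫ u in (0:ℝ)..t, lconv (onesConv m κ) k u)
        = ∫ u in (0:ℝ)..t, u ^ m / m.factorial := by
      rw [intervalIntegral.integral_of_le ht.le, intervalIntegral.integral_of_le ht.le]
      exact setIntegral_congr_fun measurableSet_Ioc fun u hu => ih.2 u hu.1
    rw [this, intervalIntegral.integral_div, integral_pow, Nat.factorial_succ]
    have := Nat.factorial_ne_zero m
    push_cast
    field_simp
    simp

/-- For a Sonine pair `(κ, k)` from `S_{-1}` and `n ≥ 1`, the kernels
`κ_n = {1}^{n-1} * κ` and `k_n = k` satisfy `κ_n ∈ C_{-1}(0,∞)`, `k_n ∈ C_{-1,0}(0,∞)` and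
`(κ_n * k_n)(t) = t^{n-1}/(n-1)!` for `t > 0`; i.e. `(κ_n, k_n)` belongs to `L_n`. -/
theorem statement10 (κ k : ℝ → ℝ) (hκ : Cm10 κ) (hk : Cm10 k)
    (hSonine : ∀ t : ℝ, 0 < t → lconv κ k t = 1)
    (n : ℕ) (hn : 1 ≤ n) :
    Cm1 (onesConv (n - 1) κ) ∧ Cm10 k ∧
      ∀ t : ℝ, 0 < t →
        lconv (onesConv (n - 1) κ) k t = t ^ (n - 1) / (n - 1).factorial := by
  obtain ⟨h1, h2⟩ := onesConv_aux κ k hκ.cm1 hk.cm1 hSonine (n - 1)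
  exact ⟨h1, hk, h2⟩
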